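/- Let a, b be real numbers with b ≠ 0 and let f, g ∈ L¹(ℝ, ℂ). Then f⋆g = g⋆f (the convolution ⋆ is commutative), i.e. (f⋆g)(t) = (g⋆f)(t) for almost every t ∈ ℝ. -/

import Mathlib

open MeasureTheory Filter

noncomputable def ccKernel (a b : ℝ) (f g : ℝ → ℂ) (t x : ℝ) : ℂ :=
  Complex.exp (-(Complex.I/2) * ((a:ℂ)/(b:ℂ)) * (t:ℂ)^2) *
    Complex.exp ((Complex.I/2) * ((a:ℂ)/(b:ℂ)) * (x:ℂ)^2) * f x *
    (Complex.exp ((Complex.I/2) * ((a:ℂ)/(b:ℂ)) * ((x:ℂ)+(t:ℂ))^2) * g (x+t) +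
     Complex.exp ((Complex.I/2) * ((a:ℂ)/(b:ℂ)) * ((x:ℂ)-(t:ℂ))^2) * g (x-t))

noncomputable def ccConv (a b : ℝ) (f g : ℝ → ℂ) (t : ℝ) : ℂ :=
  (1/2 : ℂ) * ∫ x : ℝ, ccKernel a b f g t x

/-!
Up to a factor depending only on `t`, the operation `⋆` is the symmetrized correlation
`∫ F x * (G (x + t) + G (x - t))` of the chirped functions `F` and `G`, which are again integrable.
For almost every `t` this integral splits into two, and translating `x` by `t` exchanges
`∫ F x * G (x + t)` with `∫ G x * F (x - t)`.
-/

section SymmCorrelation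

variable {A R : Type*} [AddGroup A] [MeasurableSpace A]

theorem ae_integrable_mul_comp_add [MeasurableAdd₂ A] [NormedRing R] {μ ν : Measure A} [SFinite μ]
    [SFinite ν] [ν.IsAddLeftInvariant] {F G : A → R} (hF : Integrable F μ) (hG : Integrable G ν) :
    ∀ᵐ t ∂ν, Integrable (fun x => F x * G (x + t)) μ :=
  ((measurePreserving_prod_add μ ν).integrable_comp_of_integrable (hF.mul_prod hG)).prod_left_ae

variable [NormedCommRing R] {μ : Measure A} {F G : A → R}

theorem integrable_mul_comp_sub_iff [MeasurableAdd A] [μ.IsAddRightInvariant] {t : A} :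
    Integrable (fun x => F x * G (x - t)) μ ↔ Integrable (fun x => G x * F (x + t)) μ := by
  rw [← (measurePreserving_add_right μ t).integrable_comp_emb (measurableEmbedding_addRight t)]
  simp only [Function.comp_def, add_sub_cancel_right, mul_comm]

variable [NormedSpace ℝ R]

theorem integral_mul_comp_sub [MeasurableAdd A] [μ.IsAddRightInvariant] (F G : A → R) (t : A) :
    ∫ x, F x * G (x - t) ∂μ = ∫ x, G x * F (x + t) ∂μ := by
  rw [← integral_add_right_eq_self (fun x => F x * G (x - t)) t]
  simp only [add_sub_cancel_right, mul_comm]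

/-- The symmetrized correlation of `F` and `G`, which pairs `F` with the sum of the translates of
`G` by `t` and `-t`; it is the convolution `⋆` without its chirp weights. Its value is `0` wherever
the integrand is not integrable. -/
noncomputable def symmCorrelation (μ : Measure A) (F G : A → R) (t : A) : R :=
  ∫ x, F x * (G (x + t) + G (x - t)) ∂μ

theorem symmCorrelation_eq_add [MeasurableAdd A] [μ.IsAddRightInvariant] {t : A}
    (hFG : Integrable (fun x => F x * G (x + t)) μ)
    (hGF : Integrable (fun x => G x * F (x + t)) μ) :
    symmCorrelation μ F G t = ∫ x, F x * G (x + t) ∂μ + ∫ x, G x * F (x + t) ∂μ := by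
  simp only [symmCorrelation, mul_add]
  rw [integral_add hFG (integrable_mul_comp_sub_iff.mpr hGF), integral_mul_comp_sub]

theorem ae_symmCorrelation_comm [MeasurableAdd₂ A] [SFinite μ] [μ.IsAddLeftInvariant]
    [μ.IsAddRightInvariant] (hF : Integrable F μ) (hG : Integrable G μ) :
    ∀ᵐ t ∂μ, symmCorrelation μ F G t = symmCorrelation μ G F t := by
  filter_upwards [ae_integrable_mul_comp_add hF hG, ae_integrable_mul_comp_add hG hF]
    with t hFG hGF
  rw [symmCorrelation_eq_add hFG hGF, symmCorrelation_eq_add hGF hFG, add_comm]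

end SymmCorrelation

/-- The chirp `x ↦ exp (i c x² / 2)` of rate `c`; the convolution `⋆` is weighted by chirps of
rate `± a / b`. -/
noncomputable def chirp (c x : ℝ) : ℂ :=
  Complex.exp ((c * x ^ 2 / 2 : ℝ) * Complex.I)

theorem continuous_chirp (c : ℝ) : Continuous (chirp c) := by
  unfold chirp
  fun_prop

theorem norm_chirp (c x : ℝ) : ‖chirp c x‖ = 1 :=
  Complex.norm_exp_ofReal_mul_I _

theorem integrable_chirp_mul {μ : Measure ℝ} {f : ℝ → ℂ} (c : ℝ) (hf : Integrable f μ) :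
    Integrable (chirp c * f) μ :=
  hf.bdd_mul (continuous_chirp c).aestronglyMeasurable
    (.of_forall fun x => (norm_chirp c x).le)

theorem ccKernel_eq_chirp_mul (a b : ℝ) (f g : ℝ → ℂ) (t x : ℝ) :
    ccKernel a b f g t x = chirp (-(a / b)) t * ((chirp (a / b) * f) x *
      ((chirp (a / b) * g) (x + t) + (chirp (a / b) * g) (x - t))) := by
  simp only [ccKernel, chirp, Pi.mul_apply]
  push_cast
  ring_nf

theorem ccConv_eq_chirp_mul_symmCorrelation (a b : ℝ) (f g : ℝ → ℂ) (t : ℝ) :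
    ccConv a b f g t = 1 / 2 * (chirp (-(a / b)) t *
      symmCorrelation volume (chirp (a / b) * f) (chirp (a / b) * g) t) := by
  simp only [ccConv, ccKernel_eq_chirp_mul, integral_const_mul, symmCorrelation]

theorem ccConv_comm (a b : ℝ) (hb : b ≠ 0) (f g : ℝ → ℂ)
    (hf : Integrable f) (hg : Integrable g) :
    ∀ᵐ t : ℝ, ccConv a b f g t = ccConv a b g f t := by
  filter_upwards [ae_symmCorrelation_comm (integrable_chirp_mul (a / b) hf)
    (integrable_chirp_mul (a / b) hg)] with t ht
  simp only [ccConv_eq_chirp_mul_symmCorrelation, ht]
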